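/- arXiv:1810.03061 — 3 statements merged into one kernel-verified Lean document; each statement's English description precedes it below -/
import Mathlib

section
/- Let p and (p_k)_{k∈ℕ} be Borel probability measures on SL(2,ℝ) with finite first moment (i.e. elements of P₁(SL(2,ℝ))), and suppose W₁(p_k, p) → 0 as k → ∞. Then limsup_{k→∞} λ₊(p_k) ≤ λ₊(p). In other words, the function p ↦ λ₊(p) is upper semicontinuous on P₁(SL(2,ℝ)) with respect to the Wasserstein topology. -/
open MeasureTheory Filter Topology Matrix
open scoped ENNReal

noncomputable section

abbrev SL2 : Type := Matrix.SpecialLinearGroup (Fin 2) ℝ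

/-- Topology on `SL(2,ℝ)` induced from the (finite-dimensional) space of matrices. -/
instance : TopologicalSpace SL2 :=
  TopologicalSpace.induced (fun α : SL2 => (α : Matrix (Fin 2) (Fin 2) ℝ)) inferInstance

/-- Borel σ-algebra on `SL(2,ℝ)`. -/
instance : MeasurableSpace SL2 := borel SL2

/-- The ℓ² operator norm of a 2×2 real matrix. -/
noncomputable def opNorm (A : Matrix (Fin 2) (Fin 2) ℝ) : ℝ :=
  ‖LinearMap.toContinuousLinearMap (Matrix.toEuclideanLin A)‖

/-- Distance on `SL(2,ℝ)` induced by the operator norm. -/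
noncomputable def dSL (α β : SL2) : ℝ :=
  opNorm ((α : Matrix (Fin 2) (Fin 2) ℝ) - (β : Matrix (Fin 2) (Fin 2) ℝ))

/-- The sequence `n ↦ (1/n) ∫ log (nrm (B(β_{n-1}) ⋯ B(β_1) B(β_0))) dqⁿ`. -/
noncomputable def lyapSeq {X G : Type*} [MeasurableSpace X] [Monoid G]
    (B : X → G) (nrm : G → ℝ) (q : Measure X) [SigmaFinite q] : ℕ → ℝ := fun n =>
  (n : ℝ)⁻¹ * ∫ ω : Fin n → X,
    Real.log (nrm ((List.ofFn fun i => B (ω i)).reverse.prod)) ∂(Measure.pi fun _ => q)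

/-- Top Lyapunov exponent of the i.i.d. cocycle generated by `B` with distribution `q`,
`λ₊(B,q) = lim_n (1/n) ∫ log (nrm (B(β_{n-1}) ⋯ B(β_0))) dqⁿ`. -/
noncomputable def lyapCocycle {X G : Type*} [MeasurableSpace X] [Monoid G]
    (B : X → G) (nrm : G → ℝ) (q : Measure X) [SigmaFinite q] : ℝ :=
  limUnder atTop (lyapSeq B nrm q)

/-- Top Lyapunov exponent of i.i.d. products of matrices in `SL(2,ℝ)`. -/
noncomputable def lyapPlus (p : Measure SL2) [SigmaFinite p] : ℝ :=
  lyapCocycle id (fun α : SL2 => opNorm (α : Matrix (Fin 2) (Fin 2) ℝ)) p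

/-- Bottom Lyapunov exponent of i.i.d. products of matrices in `SL(2,ℝ)`:
`λ₋(p) = lim_n (1/n) ∫ log (‖(α_{n-1}⋯α₀)⁻¹‖⁻¹) dpⁿ`. -/
noncomputable def lyapMinus (p : Measure SL2) [SigmaFinite p] : ℝ :=
  lyapCocycle id (fun α : SL2 => (opNorm ((α⁻¹ : SL2) : Matrix (Fin 2) (Fin 2) ℝ))⁻¹) p

/-- Wasserstein-1 distance of two measures, with respect to a distance function `d`:
the infimum over all couplings `π` of `μ` and `ν` of `∫ d(x,y) dπ`. -/
noncomputable def W1 {M : Type*} [MeasurableSpace M] (d : M → M → ℝ) (μ ν : Measure M) : ℝ≥0∞ :=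
  ⨅ (π : Measure (M × M)) (_ : π.map Prod.fst = μ) (_ : π.map Prod.snd = ν),
    ∫⁻ x, ENNReal.ofReal (d x.1 x.2) ∂π

/-! By Fekete's lemma `λ₊(q)` is the infimum over `n ≠ 0` of the normalized means
`(1/n) ∫ log‖α_{n-1}⋯α₀‖ dqⁿ`, so it suffices that each of these is upper semicontinuous in `q`.
Taking independent copies of a coupling gives `W₁(qⁿ, pⁿ) ≤ n W₁(q, p)`. The integrand need not be
Lipschitz, but it has linear growth, so it is the decreasing limit of its Lipschitz envelopes; their
integrals converge by domination, and each of them is controlled by `W₁`. -/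

section LipschitzEnvelope

open scoped NNReal

theorem eventually_le_coe_nnreal_atTop (C : ℝ) : ∀ᶠ K : ℝ≥0 in atTop, C ≤ K :=
  (NNReal.tendsto_coe_atTop.2 tendsto_id).eventually_ge_atTop C

variable {X : Type*} [PseudoMetricSpace X] {f : X → ℝ} {C : ℝ} {x₀ : X} {K : ℝ≥0}

/-- The Pasch–Hausdorff envelope of `f`: its least `K`-Lipschitz majorant, provided that some
`K`-Lipschitz majorant exists (otherwise the supremum may take the junk value `0`). -/
def lipschitzEnvelope (K : ℝ≥0) (f : X → ℝ) (x : X) : ℝ :=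
  ⨆ y, (f y - K * dist x y)

theorem sub_mul_dist_le (hf : ∀ x, f x ≤ C * (1 + dist x₀ x)) (hC : 0 ≤ C)
    (x y : X) : f y - K * dist x y ≤ C * (1 + dist x₀ x) - (K - C) * dist x y := by
  have htri : C * dist x₀ y ≤ C * (dist x₀ x + dist x y) := by
    gcongr
    exact dist_triangle x₀ x y
  linarith [hf y]

theorem sub_mul_dist_le_of_le (hf : ∀ x, f x ≤ C * (1 + dist x₀ x)) (hC : 0 ≤ C) (hK : C ≤ K)
    (x y : X) : f y - K * dist x y ≤ C * (1 + dist x₀ x) := by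
  have hdist : 0 ≤ (K - C) * dist x y := mul_nonneg (sub_nonneg.2 hK) dist_nonneg
  linarith [sub_mul_dist_le (K := K) hf hC x y]

theorem bddAbove_range_sub_mul_dist (hf : ∀ x, f x ≤ C * (1 + dist x₀ x)) (hC : 0 ≤ C)
    (hK : C ≤ K) (x : X) : BddAbove (Set.range fun y => f y - K * dist x y) :=
  ⟨_, Set.forall_mem_range.2 (sub_mul_dist_le_of_le hf hC hK x)⟩

theorem lipschitzEnvelope_le (hf : ∀ x, f x ≤ C * (1 + dist x₀ x)) (hC : 0 ≤ C) (hK : C ≤ K)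
    (x : X) : lipschitzEnvelope K f x ≤ C * (1 + dist x₀ x) :=
  have : Nonempty X := ⟨x⟩
  ciSup_le (sub_mul_dist_le_of_le hf hC hK x)

theorem le_lipschitzEnvelope (hf : ∀ x, f x ≤ C * (1 + dist x₀ x)) (hC : 0 ≤ C) (hK : C ≤ K)
    (x : X) : f x ≤ lipschitzEnvelope K f x := by
  simpa [lipschitzEnvelope] using le_ciSup (bddAbove_range_sub_mul_dist hf hC hK x) x

theorem lipschitzWith_lipschitzEnvelope (hf : ∀ x, f x ≤ C * (1 + dist x₀ x)) (hC : 0 ≤ C)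
    (hK : C ≤ K) : LipschitzWith K (lipschitzEnvelope K f) := by
  refine LipschitzWith.of_le_add_mul K fun x y => ?_
  have : Nonempty X := ⟨x⟩
  refine ciSup_le fun z => ?_
  calc f z - K * dist x z ≤ (f z - K * dist y z) + K * dist x y := by
        have htri : K * dist y z ≤ K * (dist x y + dist x z) := by
          gcongr
          exact dist_triangle_left y z x
        linarith
    _ ≤ lipschitzEnvelope K f y + K * dist x y := by
        gcongr
        exact le_ciSup (bddAbove_range_sub_mul_dist hf hC hK y) z

theorem abs_lipschitzEnvelope_le (hf : ∀ x, |f x| ≤ C * (1 + dist x₀ x)) (hC : 0 ≤ C)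
    (hK : C ≤ K) (x : X) : |lipschitzEnvelope K f x| ≤ C * (1 + dist x₀ x) := by
  have hf_le : ∀ x, f x ≤ C * (1 + dist x₀ x) := fun x => (le_abs_self _).trans (hf x)
  exact abs_le.2 ⟨(abs_le.1 (hf x)).1.trans (le_lipschitzEnvelope hf_le hC hK x),
    lipschitzEnvelope_le hf_le hC hK x⟩

theorem eventually_lipschitzEnvelope_le (hf : ∀ x, f x ≤ C * (1 + dist x₀ x)) (hC : 0 ≤ C)
    {x : X} {c : ℝ} (hc : ∀ᶠ y in 𝓝 x, f y < c) :
    ∀ᶠ K : ℝ≥0 in atTop, lipschitzEnvelope K f x ≤ c := by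
  have : Nonempty X := ⟨x⟩
  obtain ⟨δ, hδ, hball⟩ := Metric.eventually_nhds_iff.1 hc
  have hlarge : ∀ᶠ K : ℝ≥0 in atTop, C + (C * (1 + dist x₀ x) - c) / δ ≤ K :=
    eventually_le_coe_nnreal_atTop _
  have hCK : ∀ᶠ K : ℝ≥0 in atTop, C ≤ K :=
    eventually_le_coe_nnreal_atTop _
  filter_upwards [hlarge, hCK] with K hK hCK
  refine ciSup_le fun y => ?_
  rcases lt_or_ge (dist y x) δ with hnear | hfar
  · have hdist : 0 ≤ K * dist x y := by positivity
    linarith [hball hnear]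
  · have hsteep : C * (1 + dist x₀ x) - c ≤ (K - C) * δ :=
      (div_le_iff₀ hδ).1 (le_sub_iff_add_le'.2 hK)
    have hdist : (K - C) * δ ≤ (K - C) * dist x y := by
      rw [dist_comm x y]
      exact mul_le_mul_of_nonneg_left hfar (sub_nonneg.2 hCK)
    linarith [sub_mul_dist_le (K := K) hf hC x y]

theorem tendsto_lipschitzEnvelope {x : X} (husc : UpperSemicontinuousAt f x)
    (hf : ∀ x, f x ≤ C * (1 + dist x₀ x)) (hC : 0 ≤ C) :
    Tendsto (fun K => lipschitzEnvelope K f x) atTop (𝓝 (f x)) := by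
  refine tendsto_order.2 ⟨fun b hb => ?_, fun b hb => ?_⟩
  · filter_upwards [eventually_le_coe_nnreal_atTop C] with K hK
    exact hb.trans_le (le_lipschitzEnvelope hf hC hK x)
  · obtain ⟨c, hfc, hcb⟩ := exists_between hb
    exact (eventually_lipschitzEnvelope_le hf hC (husc c hfc)).mono fun K hK => hK.trans_lt hcb

variable [MeasurableSpace X] {μ : Measure X} [IsFiniteMeasure μ]

theorem integrable_of_linear_growth (hfm : AEStronglyMeasurable f μ)
    (hf : ∀ x, |f x| ≤ C * (1 + dist x₀ x)) (hμ : Integrable (dist x₀) μ) : Integrable f μ :=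
  (((integrable_const 1).add hμ).const_mul C).mono' hfm (Eventually.of_forall hf)

theorem tendsto_integral_lipschitzEnvelope [OpensMeasurableSpace X]
    (husc : UpperSemicontinuous f)
    (hf : ∀ x, |f x| ≤ C * (1 + dist x₀ x)) (hC : 0 ≤ C) (hμ : Integrable (dist x₀) μ) :
    Tendsto (fun K => ∫ x, lipschitzEnvelope K f x ∂μ) atTop (𝓝 (∫ x, f x ∂μ)) := by
  have hf_le : ∀ x, f x ≤ C * (1 + dist x₀ x) := fun x => (le_abs_self _).trans (hf x)
  have hCK : ∀ᶠ K : ℝ≥0 in atTop, C ≤ K :=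
    eventually_le_coe_nnreal_atTop C
  refine tendsto_integral_filter_of_dominated_convergence (fun x => C * (1 + dist x₀ x)) ?_ ?_
    (((integrable_const 1).add hμ).const_mul C) (Eventually.of_forall fun x =>
      tendsto_lipschitzEnvelope (husc x) hf_le hC)
  · filter_upwards [hCK] with K hK
    exact (lipschitzWith_lipschitzEnvelope hf_le hC hK).continuous.aestronglyMeasurable
  · filter_upwards [hCK] with K hK
    exact Eventually.of_forall (abs_lipschitzEnvelope_le hf hC hK)

end LipschitzEnvelope

section Wasserstein

open scoped NNReal

theorem W1_lt_iff {M : Type*} [MeasurableSpace M] {d : M → M → ℝ} {μ ν : Measure M} {c : ℝ≥0∞} :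
    W1 d μ ν < c ↔ ∃ π : Measure (M × M), π.map Prod.fst = μ ∧ π.map Prod.snd = ν ∧
      ∫⁻ z, ENNReal.ofReal (d z.1 z.2) ∂π < c := by
  simp only [W1, iInf_lt_iff, exists_prop]

variable {X : Type*} [PseudoMetricSpace X]

theorem dist_pi_le_sum {ι : Type*} [Fintype ι] (x y : ι → X) :
    dist x y ≤ ∑ i, dist (x i) (y i) :=
  (dist_pi_le_iff (Finset.sum_nonneg fun _ _ => dist_nonneg)).2 fun i =>
    Finset.single_le_sum (f := fun i => dist (x i) (y i)) (fun _ _ => dist_nonneg)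
      (Finset.mem_univ i)

variable [MeasurableSpace X] [OpensMeasurableSpace X] [SecondCountableTopology X]

theorem integral_le_add_mul_of_W1_lt
    {μ ν : Measure X} {g : X → ℝ} {K : ℝ≥0} {δ : ℝ}
    (hg : LipschitzWith K g) (hμ : Integrable g μ) (hν : Integrable g ν)
    (hW : W1 dist μ ν < ENNReal.ofReal δ) : ∫ x, g x ∂μ ≤ ∫ x, g x ∂ν + K * δ := by
  obtain ⟨π, rfl, rfl, hcost⟩ := W1_lt_iff.1 hW
  have hdist : Integrable (fun z : X × X => dist z.1 z.2) π :=
    (lintegral_ofReal_ne_top_iff_integrable measurable_dist.aestronglyMeasurable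
      (Eventually.of_forall fun _ => dist_nonneg)).1 hcost.ne_top
  have hcost' : ∫ z, dist z.1 z.2 ∂π ≤ δ := by
    rw [← ofReal_integral_eq_lintegral_ofReal hdist (Eventually.of_forall fun _ => dist_nonneg)]
      at hcost
    exact (ENNReal.ofReal_lt_ofReal_iff'.1 hcost).1.le
  have hfst : Integrable (fun z : X × X => g z.1) π := hμ.comp_measurable measurable_fst
  have hsnd : Integrable (fun z : X × X => g z.2) π := hν.comp_measurable measurable_snd
  have hgm := hg.continuous.measurable
  calc ∫ x, g x ∂(π.map Prod.fst) = ∫ z, g z.1 ∂π :=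
        integral_map measurable_fst.aemeasurable hgm.aestronglyMeasurable
    _ ≤ ∫ z, (g z.2 + K * dist z.1 z.2) ∂π :=
        integral_mono hfst (hsnd.add (hdist.const_mul _)) fun z => hg.le_add_mul z.1 z.2
    _ = ∫ x, g x ∂(π.map Prod.snd) + K * ∫ z, dist z.1 z.2 ∂π := by
        rw [integral_add hsnd (hdist.const_mul _), integral_const_mul,
          integral_map measurable_snd.aemeasurable hgm.aestronglyMeasurable]
    _ ≤ ∫ x, g x ∂(π.map Prod.snd) + K * δ := by gcongr

theorem eventually_integral_lt_of_tendsto_W1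
    {ι : Type*} {l : Filter ι} {μ : ι → Measure X} {ν : Measure X}
    [∀ i, IsFiniteMeasure (μ i)] [IsFiniteMeasure ν] {f : X → ℝ} {C c : ℝ} {x₀ : X}
    (husc : UpperSemicontinuous f) (hf : ∀ x, |f x| ≤ C * (1 + dist x₀ x))
    (hμ : ∀ i, Integrable (dist x₀) (μ i)) (hν : Integrable (dist x₀) ν)
    (hW : Tendsto (fun i => W1 dist (μ i) ν) l (𝓝 0)) (hc : ∫ x, f x ∂ν < c) :
    ∀ᶠ i in l, ∫ x, f x ∂(μ i) < c := by
  have hC : 0 ≤ C := by simpa using (abs_nonneg _).trans (hf x₀)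
  have hf_le : ∀ x, f x ≤ C * (1 + dist x₀ x) := fun x => (le_abs_self _).trans (hf x)
  obtain ⟨K, hKc, hK⟩ :=
    (((tendsto_integral_lipschitzEnvelope husc hf hC hν).eventually_lt_const hc).and
      (eventually_le_coe_nnreal_atTop C)).exists
  have hlip : LipschitzWith K (lipschitzEnvelope K f) :=
    lipschitzWith_lipschitzEnvelope hf_le hC hK
  have henv : ∀ q : Measure X, [IsFiniteMeasure q] → Integrable (dist x₀) q →
      Integrable (lipschitzEnvelope K f) q := fun q _ hq =>
    integrable_of_linear_growth hlip.continuous.aestronglyMeasurable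
      (abs_lipschitzEnvelope_le hf hC hK) hq
  obtain ⟨δ, hδ, hKδ⟩ := exists_pos_mul_lt (sub_pos.2 hKc) (K : ℝ)
  filter_upwards [hW.eventually_lt_const (ENNReal.ofReal_pos.2 hδ)] with i hi
  calc ∫ x, f x ∂(μ i) ≤ ∫ x, lipschitzEnvelope K f x ∂(μ i) :=
        integral_mono (integrable_of_linear_growth husc.measurable.aestronglyMeasurable hf (hμ i))
          (henv _ (hμ i)) (le_lipschitzEnvelope hf_le hC hK)
    _ ≤ ∫ x, lipschitzEnvelope K f x ∂ν + K * δ :=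
        integral_le_add_mul_of_W1_lt hlip (henv _ (hμ i)) (henv _ hν) hi
    _ < c := by linarith

theorem W1_pi_le
    (ι : Type*) [Fintype ι] [Nonempty ι] (μ ν : Measure X) [IsProbabilityMeasure μ] :
    W1 dist (Measure.pi fun _ : ι => μ) (Measure.pi fun _ : ι => ν) ≤
      Fintype.card ι * W1 dist μ ν := by
  simp only [W1, ENNReal.mul_iInf_of_ne (Nat.cast_ne_zero.2 Fintype.card_ne_zero)
    (ENNReal.natCast_ne_top _)]
  refine le_iInf fun π => le_iInf fun hfst => le_iInf fun hsnd => ?_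
  have : IsProbabilityMeasure (π.map Prod.fst) := hfst ▸ inferInstance
  have : IsProbabilityMeasure π := π.isProbabilityMeasure_of_map Prod.fst
  have : IsProbabilityMeasure ν :=
    hsnd ▸ Measure.isProbabilityMeasure_map measurable_snd.aemeasurable
  have hpfst : MeasurePreserving (fun (z : ι → X × X) i => (z i).1) (Measure.pi fun _ => π)
      (Measure.pi fun _ => μ) := measurePreserving_pi _ _ fun _ => ⟨measurable_fst, hfst⟩
  have hpsnd : MeasurePreserving (fun (z : ι → X × X) i => (z i).2) (Measure.pi fun _ => π)
      (Measure.pi fun _ => ν) := measurePreserving_pi _ _ fun _ => ⟨measurable_snd, hsnd⟩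
  let unzip : (ι → X × X) → (ι → X) × (ι → X) := fun z => (fun i => (z i).1, fun i => (z i).2)
  have hunzip : Measurable unzip := hpfst.measurable.prodMk hpsnd.measurable
  have hcost : Measurable fun z : X × X => ENNReal.ofReal (dist z.1 z.2) :=
    measurable_dist.ennreal_ofReal
  refine (iInf₂_le_of_le ((Measure.pi fun _ : ι => π).map unzip)
    ((Measure.map_map measurable_fst hunzip).trans hpfst.map_eq)
    (iInf_le _ ((Measure.map_map measurable_snd hunzip).trans hpsnd.map_eq))).trans ?_
  calc ∫⁻ w, ENNReal.ofReal (dist w.1 w.2) ∂((Measure.pi fun _ : ι => π).map unzip)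
      ≤ ∫⁻ z, ENNReal.ofReal (dist (unzip z).1 (unzip z).2) ∂(Measure.pi fun _ : ι => π) :=
        lintegral_map_le _ _
    _ ≤ ∫⁻ z, ∑ i, ENNReal.ofReal (dist (z i).1 (z i).2) ∂(Measure.pi fun _ : ι => π) := by
        refine lintegral_mono fun z => ?_
        rw [← ENNReal.ofReal_sum_of_nonneg fun _ _ => dist_nonneg]
        exact ENNReal.ofReal_le_ofReal (dist_pi_le_sum _ _)
    _ = ∑ i : ι, ∫⁻ z, ENNReal.ofReal (dist (z i).1 (z i).2) ∂(Measure.pi fun _ : ι => π) :=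
        lintegral_finsetSum _ fun i _ => hcost.comp (measurable_pi_apply i)
    _ = Fintype.card ι * ∫⁻ z, ENNReal.ofReal (dist z.1 z.2) ∂π := by
        simp only [(measurePreserving_eval (fun _ : ι => π) _).lintegral_comp hcost,
          Finset.sum_const, Finset.card_univ, nsmul_eq_mul]

theorem tendsto_W1_pi
    (ι : Type*) [Fintype ι] [Nonempty ι] {κ : Type*} {l : Filter κ} {μ : κ → Measure X}
    {ν : Measure X} [∀ k, IsProbabilityMeasure (μ k)]
    (hW : Tendsto (fun k => W1 dist (μ k) ν) l (𝓝 0)) :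
    Tendsto (fun k => W1 dist (Measure.pi fun _ : ι => μ k) (Measure.pi fun _ : ι => ν)) l
      (𝓝 0) := by
  have hmul : Tendsto (fun k => Fintype.card ι * W1 dist (μ k) ν) l (𝓝 0) := by
    simpa using ENNReal.Tendsto.const_mul hW (Or.inr (ENNReal.natCast_ne_top (Fintype.card ι)))
  exact tendsto_of_tendsto_of_tendsto_of_le_of_le tendsto_const_nhds hmul (fun _ => zero_le)
    fun k => W1_pi_le ι (μ k) ν

theorem integrable_dist_pi
    {ι : Type*} [Fintype ι] {μ : ι → Measure X} [∀ i, IsProbabilityMeasure (μ i)] {x₀ : ι → X}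
    (hμ : ∀ i, Integrable (dist (x₀ i)) (μ i)) : Integrable (dist x₀) (Measure.pi μ) := by
  have hsum : Integrable (fun ω : ι → X => ∑ i, dist (x₀ i) (ω i)) (Measure.pi μ) :=
    integrable_finsetSum _ fun i _ =>
      (measurePreserving_eval μ i).integrable_comp_of_integrable (hμ i)
  refine hsum.mono' (measurable_const.dist measurable_id).aestronglyMeasurable
    (Eventually.of_forall fun ω => ?_)
  rw [Real.norm_of_nonneg dist_nonneg]
  exact dist_pi_le_sum x₀ ω

end Wasserstein

section Cocycle

theorem measurePreserving_comp_of_injective {ι κ X : Type*} [Fintype ι] [Fintype κ]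
    [MeasurableSpace X] (p : Measure X) [IsProbabilityMeasure p] {g : ι → κ}
    (hg : Function.Injective g) :
    MeasurePreserving (fun ω : κ → X => ω ∘ g) (Measure.pi fun _ => p) (Measure.pi fun _ => p) := by
  have hmeas : Measurable fun ω : κ → X => ω ∘ g :=
    measurable_pi_lambda _ fun i => measurable_pi_apply (g i)
  have hindep : ProbabilityTheory.iIndepFun (fun i (ω : κ → X) => ω (g i))
      (Measure.pi fun _ => p) :=
    (ProbabilityTheory.iIndepFun_pi (X := fun _ => id) fun _ => aemeasurable_id).precomp hg
  refine ⟨hmeas, ?_⟩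
  rw [ProbabilityTheory.iIndepFun_iff_map_fun_eq_pi_map
    fun i => (measurable_pi_apply (g i)).aemeasurable] at hindep
  simp only [(measurePreserving_eval (fun _ : κ => p) _).map_eq] at hindep
  exact hindep

variable {X G : Type*} [Monoid G] {B : X → G} {nrm : G → ℝ}

/-- The log norm `log (nrm (B(ω_{n-1}) ⋯ B(ω_0)))` of an `n`-step product, whose mean is `n` times
the `n`-th term of `lyapSeq`. -/
def logNrmProd (B : X → G) (nrm : G → ℝ) (n : ℕ) (ω : Fin n → X) : ℝ :=
  Real.log (nrm (List.ofFn fun i => B (ω i)).reverse.prod)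

theorem logNrmProd_nonneg (one_le : ∀ g, 1 ≤ nrm g) (n : ℕ) (ω : Fin n → X) :
    0 ≤ logNrmProd B nrm n ω :=
  Real.log_nonneg (one_le _)

theorem log_nrm_mul_le (pos : ∀ g, 0 < nrm g) (mul_le : ∀ g h, nrm (g * h) ≤ nrm g * nrm h)
    (g h : G) : Real.log (nrm (g * h)) ≤ Real.log (nrm g) + Real.log (nrm h) := by
  rw [← Real.log_mul (pos g).ne' (pos h).ne']
  exact Real.log_le_log (pos _) (mul_le g h)

theorem logNrmProd_add_le (pos : ∀ g, 0 < nrm g) (mul_le : ∀ g h, nrm (g * h) ≤ nrm g * nrm h)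
    (m n : ℕ) (ω : Fin (m + n) → X) :
    logNrmProd B nrm (m + n) ω ≤
      logNrmProd B nrm m (ω ∘ Fin.castAdd n) + logNrmProd B nrm n (ω ∘ Fin.natAdd m) := by
  rw [add_comm (logNrmProd B nrm m _)]
  simp only [logNrmProd, List.ofFn_add, List.reverse_append, List.prod_append]
  exact log_nrm_mul_le pos mul_le _ _

theorem log_nrm_list_prod_le (pos : ∀ g, 0 < nrm g) (mul_le : ∀ g h, nrm (g * h) ≤ nrm g * nrm h)
    (l : List G) :
    Real.log (nrm l.prod) ≤ Real.log (nrm 1) + (l.map fun g => Real.log (nrm g)).sum := by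
  induction l with
  | nil => simp
  | cons g l ih =>
    rw [List.prod_cons, List.map_cons, List.sum_cons]
    linarith [log_nrm_mul_le pos mul_le g l.prod]

theorem logNrmProd_le_sum (pos : ∀ g, 0 < nrm g) (mul_le : ∀ g h, nrm (g * h) ≤ nrm g * nrm h)
    (n : ℕ) (ω : Fin n → X) :
    logNrmProd B nrm n ω ≤ Real.log (nrm 1) + ∑ i, Real.log (nrm (B (ω i))) := by
  refine (log_nrm_list_prod_le pos mul_le _).trans_eq ?_
  rw [List.map_reverse, List.sum_reverse, List.map_ofFn, List.sum_ofFn]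
  rfl

theorem abs_logNrmProd_le [PseudoMetricSpace X] {C : ℝ} {x₀ : X} (one_le : ∀ g, 1 ≤ nrm g)
    (mul_le : ∀ g h, nrm (g * h) ≤ nrm g * nrm h)
    (growth : ∀ x, Real.log (nrm (B x)) ≤ C * (1 + dist x₀ x)) (n : ℕ) (ω : Fin n → X) :
    |logNrmProd B nrm n ω| ≤ (Real.log (nrm 1) + n * C) * (1 + dist (fun _ => x₀) ω) := by
  have hC : 0 ≤ C := by simpa using (Real.log_nonneg (one_le _)).trans (growth x₀)
  have hone : 0 ≤ Real.log (nrm 1) * dist (fun _ => x₀) ω :=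
    mul_nonneg (Real.log_nonneg (one_le 1)) dist_nonneg
  rw [abs_of_nonneg (logNrmProd_nonneg one_le n ω)]
  calc logNrmProd B nrm n ω ≤ Real.log (nrm 1) + ∑ i, Real.log (nrm (B (ω i))) :=
        logNrmProd_le_sum (fun g => one_pos.trans_le (one_le g)) mul_le n ω
    _ ≤ Real.log (nrm 1) + ∑ _i : Fin n, C * (1 + dist (fun _ => x₀) ω) := by
        gcongr with i
        refine (growth (ω i)).trans ?_
        gcongr
        exact dist_le_pi_dist (fun _ => x₀) ω i
    _ ≤ (Real.log (nrm 1) + n * C) * (1 + dist (fun _ => x₀) ω) := by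
        rw [Finset.sum_const, Finset.card_univ, Fintype.card_fin, nsmul_eq_mul]
        linarith

theorem upperSemicontinuous_logNrmProd [TopologicalSpace X] [TopologicalSpace G] [ContinuousMul G]
    (hB : Continuous B) (hnrm : UpperSemicontinuous nrm) (pos : ∀ g, 0 < nrm g) (n : ℕ) :
    UpperSemicontinuous (logNrmProd B nrm n) := by
  have hprod : Continuous fun ω : Fin n → X => (List.ofFn fun i => B (ω i)).reverse.prod := by
    simp only [List.ofFn_eq_map, ← List.map_reverse]
    exact continuous_list_prod _ fun i _ => hB.comp (continuous_apply i)
  intro ω c hc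
  exact ((hnrm.comp hprod) ω _ ((Real.log_lt_iff_lt_exp (pos _)).1 hc)).mono
    fun ω' => (Real.log_lt_iff_lt_exp (pos _)).2

variable [MeasurableSpace X]

theorem lyapSeq_eq_div {q : Measure X} [SigmaFinite q] (n : ℕ) :
    lyapSeq B nrm q n = (∫ ω, logNrmProd B nrm n ω ∂(Measure.pi fun _ => q)) / n :=
  (div_eq_inv_mul _ _).symm

theorem lyapSeq_nonneg {q : Measure X} [SigmaFinite q] (one_le : ∀ g, 1 ≤ nrm g) (n : ℕ) :
    0 ≤ lyapSeq B nrm q n := by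
  rw [lyapSeq_eq_div]
  exact div_nonneg (integral_nonneg (logNrmProd_nonneg one_le n)) n.cast_nonneg

theorem bddBelow_range_integral_logNrmProd_div {q : Measure X} (one_le : ∀ g, 1 ≤ nrm g) :
    BddBelow (Set.range fun n : ℕ =>
      (∫ ω, logNrmProd B nrm n ω ∂(Measure.pi fun _ => q)) / n) :=
  ⟨0, Set.forall_mem_range.2 fun n =>
    div_nonneg (integral_nonneg (logNrmProd_nonneg one_le n)) n.cast_nonneg⟩

variable {q : Measure X} [IsProbabilityMeasure q]

theorem subadditive_integral_logNrmProd (pos : ∀ g, 0 < nrm g)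
    (mul_le : ∀ g h, nrm (g * h) ≤ nrm g * nrm h)
    (hint : ∀ n, Integrable (logNrmProd B nrm n) (Measure.pi fun _ => q)) :
    Subadditive fun n => ∫ ω, logNrmProd B nrm n ω ∂(Measure.pi fun _ => q) := by
  intro m n
  have hfst := measurePreserving_comp_of_injective q (Fin.castAdd_injective m n)
  have hsnd := measurePreserving_comp_of_injective q (Fin.natAdd_injective n m)
  have hm := hfst.integrable_comp_of_integrable (hint m)
  have hn := hsnd.integrable_comp_of_integrable (hint n)
  calc ∫ ω, logNrmProd B nrm (m + n) ω ∂(Measure.pi fun _ => q)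
      ≤ ∫ ω, (logNrmProd B nrm m (ω ∘ Fin.castAdd n) + logNrmProd B nrm n (ω ∘ Fin.natAdd m))
          ∂(Measure.pi fun _ => q) :=
        integral_mono (hint (m + n)) (hm.add hn) (logNrmProd_add_le pos mul_le m n)
    _ = ∫ ω, logNrmProd B nrm m (ω ∘ Fin.castAdd n) ∂(Measure.pi fun _ => q) +
          ∫ ω, logNrmProd B nrm n (ω ∘ Fin.natAdd m) ∂(Measure.pi fun _ => q) :=
        integral_add hm hn
    _ = _ := by
        rw [← integral_map hfst.aemeasurable (hfst.map_eq ▸ (hint m).aestronglyMeasurable),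
          ← integral_map hsnd.aemeasurable (hsnd.map_eq ▸ (hint n).aestronglyMeasurable),
          hfst.map_eq, hsnd.map_eq]

theorem tendsto_lyapSeq (one_le : ∀ g, 1 ≤ nrm g) (mul_le : ∀ g h, nrm (g * h) ≤ nrm g * nrm h)
    (hint : ∀ n, Integrable (logNrmProd B nrm n) (Measure.pi fun _ => q)) :
    Tendsto (lyapSeq B nrm q) atTop (𝓝 (lyapCocycle B nrm q)) := by
  have hsub := subadditive_integral_logNrmProd (fun g => one_pos.trans_le (one_le g)) mul_le hint
  have hfekete := hsub.tendsto_lim (bddBelow_range_integral_logNrmProd_div one_le)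
  simp only [← lyapSeq_eq_div] at hfekete
  exact tendsto_nhds_limUnder ⟨_, hfekete⟩

theorem lyapCocycle_le_lyapSeq (one_le : ∀ g, 1 ≤ nrm g)
    (mul_le : ∀ g h, nrm (g * h) ≤ nrm g * nrm h)
    (hint : ∀ n, Integrable (logNrmProd B nrm n) (Measure.pi fun _ => q)) {n : ℕ} (hn : n ≠ 0) :
    lyapCocycle B nrm q ≤ lyapSeq B nrm q n := by
  have hsub := subadditive_integral_logNrmProd (fun g => one_pos.trans_le (one_le g)) mul_le hint
  have hbdd := bddBelow_range_integral_logNrmProd_div (B := B) (q := q) one_le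
  have hlim := hsub.tendsto_lim hbdd
  simp only [← lyapSeq_eq_div] at hlim
  rw [tendsto_nhds_unique (tendsto_lyapSeq one_le mul_le hint) hlim, lyapSeq_eq_div]
  exact hsub.lim_le_div hbdd hn

theorem lyapCocycle_nonneg (one_le : ∀ g, 1 ≤ nrm g)
    (mul_le : ∀ g h, nrm (g * h) ≤ nrm g * nrm h)
    (hint : ∀ n, Integrable (logNrmProd B nrm n) (Measure.pi fun _ => q)) :
    0 ≤ lyapCocycle B nrm q :=
  ge_of_tendsto' (tendsto_lyapSeq one_le mul_le hint) (lyapSeq_nonneg one_le)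

end Cocycle

section UpperSemicontinuity

variable {X G : Type*} [PseudoMetricSpace X] [MeasurableSpace X] [OpensMeasurableSpace X]
  [SecondCountableTopology X] [Monoid G] [TopologicalSpace G] [ContinuousMul G]
  {B : X → G} {nrm : G → ℝ} {C : ℝ} {x₀ : X}

theorem integrable_logNrmProd (hB : Continuous B) (hnrm : UpperSemicontinuous nrm)
    (one_le : ∀ g, 1 ≤ nrm g) (mul_le : ∀ g h, nrm (g * h) ≤ nrm g * nrm h)
    (growth : ∀ x, Real.log (nrm (B x)) ≤ C * (1 + dist x₀ x))
    {q : Measure X} [IsProbabilityMeasure q] (hq : Integrable (dist x₀) q) (n : ℕ) :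
    Integrable (logNrmProd B nrm n) (Measure.pi fun _ => q) :=
  have husc := upperSemicontinuous_logNrmProd hB hnrm (fun g => one_pos.trans_le (one_le g)) n
  integrable_of_linear_growth husc.measurable.aestronglyMeasurable
    (abs_logNrmProd_le one_le mul_le growth n) (integrable_dist_pi fun _ => hq)

variable {κ : Type*} {l : Filter κ} {p : Measure X} {pk : κ → Measure X} [IsProbabilityMeasure p]
  [∀ k, IsProbabilityMeasure (pk k)]

theorem eventually_lyapSeq_lt_of_tendsto_W1 (hB : Continuous B) (hnrm : UpperSemicontinuous nrm)
    (one_le : ∀ g, 1 ≤ nrm g) (mul_le : ∀ g h, nrm (g * h) ≤ nrm g * nrm h)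
    (growth : ∀ x, Real.log (nrm (B x)) ≤ C * (1 + dist x₀ x))
    (hp : Integrable (dist x₀) p) (hpk : ∀ k, Integrable (dist x₀) (pk k))
    (hW : Tendsto (fun k => W1 dist (pk k) p) l (𝓝 0))
    {n : ℕ} (hn : n ≠ 0) {c : ℝ} (hc : lyapSeq B nrm p n < c) :
    ∀ᶠ k in l, lyapSeq B nrm (pk k) n < c := by
  have : NeZero n := ⟨hn⟩
  have hn_pos : (0 : ℝ) < n := Nat.cast_pos.2 (Nat.pos_of_ne_zero hn)
  simp only [lyapSeq_eq_div, div_lt_iff₀ hn_pos] at hc ⊢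
  exact eventually_integral_lt_of_tendsto_W1
    (upperSemicontinuous_logNrmProd hB hnrm (fun g => one_pos.trans_le (one_le g)) n)
    (abs_logNrmProd_le one_le mul_le growth n) (fun k => integrable_dist_pi fun _ => hpk k)
    (integrable_dist_pi fun _ => hp) (tendsto_W1_pi (Fin n) hW) hc

theorem lyapPlus_upper_semicontinuous_wasserstein_general [l.NeBot] (hB : Continuous B)
    (hnrm : UpperSemicontinuous nrm) (one_le : ∀ g, 1 ≤ nrm g)
    (mul_le : ∀ g h, nrm (g * h) ≤ nrm g * nrm h)
    (growth : ∀ x, Real.log (nrm (B x)) ≤ C * (1 + dist x₀ x))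
    (hp : Integrable (dist x₀) p) (hpk : ∀ k, Integrable (dist x₀) (pk k))
    (hW : Tendsto (fun k => W1 dist (pk k) p) l (𝓝 0)) :
    limsup (fun k => lyapCocycle B nrm (pk k)) l ≤ lyapCocycle B nrm p := by
  have hint : ∀ q : Measure X, [IsProbabilityMeasure q] → Integrable (dist x₀) q →
      ∀ n, Integrable (logNrmProd B nrm n) (Measure.pi fun _ => q) := fun _ _ hq =>
    integrable_logNrmProd hB hnrm one_le mul_le growth hq
  refine le_of_forall_gt_imp_ge_of_dense fun c hc => ?_
  obtain ⟨n, hnc, hn⟩ := (((tendsto_lyapSeq one_le mul_le (hint p hp)).eventually_lt_const hc).and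
    (eventually_ne_atTop 0)).exists
  refine limsup_le_of_le (isCoboundedUnder_le_of_le l fun k =>
    lyapCocycle_nonneg one_le mul_le (hint _ (hpk k))) ?_
  filter_upwards [eventually_lyapSeq_lt_of_tendsto_W1 hB hnrm one_le mul_le growth hp hpk hW hn hnc]
    with k hk
  exact (lyapCocycle_le_lyapSeq one_le mul_le (hint _ (hpk k)) hn).trans hk.le

end UpperSemicontinuity

section OperatorNorm

open scoped Matrix.Norms.L2Operator

theorem abs_eigenvalues_le_l2_opNorm {n 𝕜 : Type*} [Fintype n] [DecidableEq n] [RCLike 𝕜]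
    {A : Matrix n n 𝕜} (hA : A.IsHermitian) (i : n) : |hA.eigenvalues i| ≤ ‖A‖ := by
  have : Nonempty n := ⟨i⟩
  have hmem : (hA.eigenvalues i : 𝕜) ∈ spectrum 𝕜 A :=
    spectrum.algebraMap_mem 𝕜 (hA.eigenvalues_mem_spectrum_real i)
  simpa only [RCLike.norm_ofReal] using spectrum.norm_le_norm_of_mem hmem

theorem norm_det_le_l2_opNorm_pow {n 𝕜 : Type*} [Fintype n] [DecidableEq n] [RCLike 𝕜]
    (A : Matrix n n 𝕜) : ‖A.det‖ ≤ ‖A‖ ^ Fintype.card n := by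
  have hA : (Aᴴ * A).IsHermitian := isHermitian_conjTranspose_mul_self A
  refine le_of_sq_le_sq ?_ (by positivity)
  calc ‖A.det‖ ^ 2 = ‖(Aᴴ * A).det‖ := by
        rw [det_mul, det_conjTranspose, norm_mul, norm_star, sq]
    _ = ∏ i, |hA.eigenvalues i| := by
        simp only [hA.det_eq_prod_eigenvalues, norm_prod, RCLike.norm_ofReal]
    _ ≤ ∏ _i : n, ‖Aᴴ * A‖ :=
        Finset.prod_le_prod (fun _ _ => abs_nonneg _) fun i _ => abs_eigenvalues_le_l2_opNorm hA i
    _ = (‖A‖ ^ Fintype.card n) ^ 2 := by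
        rw [Finset.prod_const, Finset.card_univ, l2_opNorm_conjTranspose_mul_self, mul_pow, sq]

theorem one_le_l2_opNorm_specialLinearGroup {n 𝕜 : Type*} [Fintype n] [DecidableEq n]
    [Nonempty n] [RCLike 𝕜] (α : Matrix.SpecialLinearGroup n 𝕜) : 1 ≤ ‖(α : Matrix n n 𝕜)‖ := by
  by_contra! hlt
  have hdet := norm_det_le_l2_opNorm_pow (α : Matrix n n 𝕜)
  rw [α.det_coe, norm_one] at hdet
  exact hdet.not_gt (pow_lt_one₀ (norm_nonneg _) hlt Fintype.card_ne_zero)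

/-- The metric on `SL(2,ℝ)` induced by the operator norm; its distance is `dSL`. -/
instance : PseudoMetricSpace SL2 :=
  .induced (fun α : SL2 => (α : Matrix (Fin 2) (Fin 2) ℝ)) inferInstance

theorem dSL_eq_dist : dSL = dist := by
  ext α β
  exact (dist_eq_norm (α : Matrix (Fin 2) (Fin 2) ℝ) (β : Matrix (Fin 2) (Fin 2) ℝ)).symm

instance : BorelSpace SL2 := ⟨rfl⟩

-- As an instance, this would give a second route to the `SigmaFinite p` inside `lyapPlus p`.
theorem secondCountableTopology_SL2 : SecondCountableTopology SL2 :=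
  Topology.IsInducing.secondCountableTopology
    (f := fun α : SL2 => (α : Matrix (Fin 2) (Fin 2) ℝ)) ⟨rfl⟩

instance : ContinuousMul SL2 :=
  ⟨(Matrix.SpecialLinearGroup.topologicalGroup (n := Fin 2) (R := ℝ)).continuous_mul⟩

theorem continuous_opNorm_coe : Continuous fun α : SL2 => opNorm α :=
  (continuous_norm (E := Matrix (Fin 2) (Fin 2) ℝ)).comp continuous_induced_dom

theorem opNorm_coe_mul_le (α β : SL2) : opNorm (α * β : SL2) ≤ opNorm α * opNorm β :=
  Matrix.l2_opNorm_mul α.1 β.1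

theorem log_opNorm_coe_le (α : SL2) : Real.log (opNorm α) ≤ 1 * (1 + dist 1 α) := by
  have hsub : opNorm α - 1 ≤ dist α 1 := by
    have hnorm := norm_sub_norm_le (α : Matrix (Fin 2) (Fin 2) ℝ) 1
    rw [norm_one, ← dist_eq_norm] at hnorm
    exact hnorm
  have hlog : Real.log (opNorm α) ≤ opNorm α - 1 :=
    Real.log_le_sub_one_of_pos (one_pos.trans_le (one_le_l2_opNorm_specialLinearGroup α))
  rw [dist_comm, one_mul]
  linarith

theorem integrable_dist_one {p : Measure SL2} (hp : ∫⁻ α, ENNReal.ofReal (dSL 1 α) ∂p < ⊤) :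
    Integrable (dist (1 : SL2)) p := by
  rw [dSL_eq_dist] at hp
  exact (lintegral_ofReal_ne_top_iff_integrable
    (continuous_const.dist continuous_id).aestronglyMeasurable
    (Eventually.of_forall fun _ => dist_nonneg)).1 hp.ne

end OperatorNorm

/-- **Upper semicontinuity of the top Lyapunov exponent in the Wasserstein topology.**
If `p` and the `p_k` are Borel probability measures on `SL(2,ℝ)` with finite first moment
and `W₁(p_k, p) → 0`, then `limsup_k λ₊(p_k) ≤ λ₊(p)`. -/
theorem lyapPlus_upper_semicontinuous_wasserstein
    (p : Measure SL2) (pk : ℕ → Measure SL2)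
    [IsProbabilityMeasure p] [∀ k, IsProbabilityMeasure (pk k)]
    (hp : ∫⁻ α, ENNReal.ofReal (dSL 1 α) ∂p < ⊤)
    (hpk : ∀ k, ∫⁻ α, ENNReal.ofReal (dSL 1 α) ∂(pk k) < ⊤)
    (hW : Tendsto (fun k => W1 dSL (pk k) p) atTop (𝓝 0)) :
    Filter.limsup (fun k => lyapPlus (pk k)) atTop ≤ lyapPlus p :=
  have := secondCountableTopology_SL2
  lyapPlus_upper_semicontinuous_wasserstein_general continuous_id
    continuous_opNorm_coe.upperSemicontinuous one_le_l2_opNorm_specialLinearGroup opNorm_coe_mul_le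
    log_opNorm_coe_le (integrable_dist_one hp) (fun k => integrable_dist_one (hpk k))
    (dSL_eq_dist ▸ hW)
end
end

section
/- There exist a Borel probability measure q ∈ P₁(SL(2,ℝ)) and a sequence (q_n)_{n∈ℕ} in P₁(SL(2,ℝ)) such that W₁(q_n, q) → 0, λ₊(q_n) = 0 for every n, and λ₊(q) > 0. In particular, the function p ↦ λ₊(p) is not continuous on P₁(SL(2,ℝ)) with respect to the Wasserstein topology. -/
open MeasureTheory Filter Topology Matrix
open scoped ENNReal

noncomputable section

/-!
Let `R` be the quarter turn and `H t = diag(e ^ t, e ^ (-t))`. Since `H t * R = R * H (-t)`, a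
product of `R`s and `H t`s equals `R ^ k * H s` for some `k`, where `s` is the position of a walk on
`ℝ` which is reflected by each `R` and translated by each `H t`; as `R` is orthogonal, the logarithm
of the norm is `|s|`. If `R` occurs with probability `p > 0`, choose `c` with `p * c = (1 - p) * t`:
then the expectation of `(s + c / 2) ^ 2` grows by a constant at each step, so that of `|s|` is
`O(√n)` and the exponent vanishes. Yet as `p → 0` the law tends in `W₁` to the Dirac mass at `H t`,
of exponent `|t|`.
-/

open ProbabilityTheory unitInterval
open scoped Matrix.Norms.L2Operator

theorem integral_pi_fin_succ {n : ℕ} {X : Fin (n + 1) → Type*} [∀ i, MeasurableSpace (X i)]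
    {E : Type*} [NormedAddCommGroup E] [NormedSpace ℝ E]
    (μ : ∀ i, Measure (X i)) [∀ i, SigmaFinite (μ i)] {F : (∀ i, X i) → E}
    (hF : Integrable F (Measure.pi μ)) :
    ∫ ω, F ω ∂Measure.pi μ =
      ∫ ω, ∫ x, F (Fin.cons x ω) ∂μ 0 ∂Measure.pi fun i : Fin n => μ i.succ := by
  have hcons := (measurePreserving_piFinSuccAbove μ 0).symm
  rw [← hcons.integral_comp', integral_prod_symm]
  · simp only [MeasurableEquiv.piFinSuccAbove_symm_apply, Fin.insertNthEquiv_zero]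
    rfl
  · exact hcons.integrable_comp_of_integrable hF

theorem measure_pi_dirac {ι : Type*} [Fintype ι] {X : ι → Type*} [∀ i, MeasurableSpace (X i)]
    (x : ∀ i, X i) : Measure.pi (fun i => Measure.dirac (x i)) = Measure.dirac x := by
  refine Measure.pi_eq fun s hs => ?_
  classical
  rw [Measure.dirac_apply' _ (.univ_pi hs)]
  simp only [Measure.dirac_apply' _ (hs _), Set.indicator_apply, Set.mem_univ_pi, Pi.one_apply,
    Finset.prod_boole, Finset.mem_univ, true_imp_iff]

theorem sq_integral_le_integral_sq {Ω : Type*} [MeasurableSpace Ω] {μ : Measure Ω}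
    [IsProbabilityMeasure μ] {f : Ω → ℝ} (hf : MemLp f 2 μ) :
    (∫ ω, f ω ∂μ) ^ 2 ≤ ∫ ω, f ω ^ 2 ∂μ :=
  sub_nonneg.1 ((variance_nonneg f μ).trans_eq (variance_eq_sub hf))

theorem lintegral_bernoulliMeasure {X : Type*} [MeasurableSpace X] [MeasurableSingletonClass X]
    (x y : X) (p : I) (f : X → ℝ≥0∞) :
    ∫⁻ z, f z ∂Ber(x, y, p) = toNNReal p * f x + toNNReal (σ p) * f y := by
  rw [bernoulliMeasure_def, lintegral_add_measure, lintegral_smul_measure, lintegral_smul_measure,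
    lintegral_dirac, lintegral_dirac, ENNReal.smul_def, ENNReal.smul_def, smul_eq_mul, smul_eq_mul]

theorem lintegral_bernoulliMeasure_lt_top {X : Type*} [MeasurableSpace X]
    [MeasurableSingletonClass X] {x y : X} (p : I) {f : X → ℝ≥0∞} (hx : f x ≠ ⊤) (hy : f y ≠ ⊤) :
    ∫⁻ z, f z ∂Ber(x, y, p) < ⊤ := by
  rw [lintegral_bernoulliMeasure]
  finiteness

theorem W1_dirac_le {M : Type*} [MeasurableSpace M] (d : M → M → ℝ) (μ : Measure M)
    [IsProbabilityMeasure μ] (a : M) :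
    W1 d μ (Measure.dirac a) ≤ ∫⁻ x, ENNReal.ofReal (d x a) ∂μ := by
  have hpair : Measurable fun x : M => (x, a) := by fun_prop
  refine iInf_le_of_le (μ.map fun x => (x, a)) <| iInf_le_of_le ?_ <| iInf_le_of_le ?_ ?_
  · rw [Measure.map_map measurable_fst hpair]
    exact Measure.map_id
  · rw [Measure.map_map measurable_snd hpair]
    simp [Function.comp_def]
  · exact lintegral_map_le _ _

theorem tendsto_W1_bernoulliMeasure_dirac {M : Type*} [MeasurableSpace M]
    [MeasurableSingletonClass M] {d : M → M → ℝ} (x : M) {y : M} (hy : d y y = 0) :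
    Tendsto (fun p : I => W1 d Ber(x, y, p) (Measure.dirac y)) (𝓝 0) (𝓝 0) := by
  have hbound (p : I) :
      W1 d Ber(x, y, p) (Measure.dirac y) ≤ toNNReal p * ENNReal.ofReal (d x y) := by
    simpa [lintegral_bernoulliMeasure, hy] using W1_dirac_le d Ber(x, y, p) y
  have hlim : Tendsto (fun p : I => (toNNReal p : ℝ≥0∞) * ENNReal.ofReal (d x y)) (𝓝 0) (𝓝 0) := by
    have hcont : Continuous fun p : I => (toNNReal p : ℝ≥0∞) * ENNReal.ofReal (d x y) :=
      (ENNReal.continuous_mul_const ENNReal.ofReal_ne_top).comp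
        (ENNReal.continuous_coe.comp toNNReal_continuous)
    simpa using hcont.tendsto 0
  exact tendsto_of_tendsto_of_tendsto_of_le_of_le tendsto_const_nhds hlim
    (fun _ => zero_le) hbound

theorem lyapSeq_id_map {X G : Type*} [MeasurableSpace X] [MeasurableSpace G] [Monoid G]
    [MeasurableMul₂ G] {B : X → G} (hB : Measurable B) {nrm : G → ℝ} (hnrm : Measurable nrm)
    (μ : Measure X) [SigmaFinite μ] [SigmaFinite (μ.map B)] (n : ℕ) :
    lyapSeq id nrm (μ.map B) n = lyapSeq B nrm μ n := by
  have hprod_meas : Measurable fun ω : Fin n → G => (List.ofFn ω).reverse.prod := by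
    have hprod :=
      (List.ofFn fun (i : Fin n) (ω : Fin n → G) => ω i).reverse.measurable_fun_prod fun f hf => by
        obtain ⟨i, rfl⟩ := List.mem_ofFn.1 (List.mem_reverse.1 hf)
        exact measurable_pi_apply i
    simpa only [List.map_reverse, List.map_ofFn, Function.comp_def] using hprod
  unfold lyapSeq
  rw [← Measure.pi_map_pi fun _ => hB.aemeasurable, integral_map]
  · rfl
  · exact (measurable_pi_lambda _ fun i => hB.comp (measurable_pi_apply i)).aemeasurable
  · exact (Real.measurable_log.comp (hnrm.comp hprod_meas)).aestronglyMeasurable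

theorem lyapSeq_dirac {X G : Type*} [MeasurableSpace X] [MeasurableSingletonClass X] [Monoid G]
    (B : X → G) (nrm : G → ℝ) (x : X) (n : ℕ) :
    lyapSeq B nrm (Measure.dirac x) n = (n : ℝ)⁻¹ * Real.log (nrm (B x ^ n)) := by
  simp only [lyapSeq, measure_pi_dirac, integral_dirac, List.ofFn_const, List.reverse_replicate,
    List.prod_replicate]

instance inst_s3 : BorelSpace SL2 := ⟨rfl⟩

instance : T2Space SL2 :=
  T2Space.of_injective_continuous Subtype.val_injective continuous_induced_dom

instance : MeasurableMul₂ SL2 :=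
  have : SecondCountableTopology SL2 := inferInstanceAs (SecondCountableTopology (Subtype _))
  have : IsTopologicalGroup SL2 := Matrix.SpecialLinearGroup.topologicalGroup
  inferInstance

theorem opNorm_eq_norm (M : Matrix (Fin 2) (Fin 2) ℝ) : opNorm M = ‖M‖ := by
  rw [Matrix.l2_opNorm_def]
  rfl

theorem measurable_opNorm_coe :
    Measurable fun α : SL2 => opNorm (α : Matrix (Fin 2) (Fin 2) ℝ) := by
  simp only [opNorm_eq_norm]
  exact (continuous_norm.comp continuous_induced_dom).measurable

theorem dSL_self (α : SL2) : dSL α α = 0 := by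
  simp only [dSL, sub_self, opNorm_eq_norm, norm_zero]

/-- The one-parameter group of hyperbolic matrices `diag(e ^ t, e ^ (-t))`. -/
def hyperbolic (t : ℝ) : SL2 :=
  ⟨Matrix.diagonal ![Real.exp t, Real.exp (-t)], by simp [← Real.exp_add]⟩

/-- The rotation by a right angle. -/
def quarterTurn : SL2 := ⟨!![0, -1; 1, 0], by simp⟩

theorem hyperbolic_zero : hyperbolic 0 = 1 := by
  ext i j
  fin_cases i <;> fin_cases j <;> simp [hyperbolic]

theorem hyperbolic_add (s t : ℝ) : hyperbolic (s + t) = hyperbolic s * hyperbolic t := by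
  refine Subtype.ext ?_
  rw [Matrix.SpecialLinearGroup.coe_mul]
  ext i j
  fin_cases i <;> fin_cases j <;> simp [hyperbolic, Real.exp_add, add_comm]

theorem hyperbolic_pow (t : ℝ) (n : ℕ) : hyperbolic t ^ n = hyperbolic (n * t) := by
  induction n with
  | zero => simp [hyperbolic_zero]
  | succ n ih => rw [pow_succ, ih, ← hyperbolic_add, Nat.cast_succ, add_one_mul]

theorem hyperbolic_mul_quarterTurn (t : ℝ) :
    hyperbolic t * quarterTurn = quarterTurn * hyperbolic (-t) := by
  refine Subtype.ext ?_
  rw [Matrix.SpecialLinearGroup.coe_mul, Matrix.SpecialLinearGroup.coe_mul]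
  ext i j
  fin_cases i <;> fin_cases j <;> simp [hyperbolic, quarterTurn]

theorem quarterTurn_mem_orthogonalGroup :
    (quarterTurn : Matrix (Fin 2) (Fin 2) ℝ) ∈ Matrix.orthogonalGroup (Fin 2) ℝ := by
  rw [Matrix.mem_orthogonalGroup_iff]
  ext i j
  fin_cases i <;> fin_cases j <;> simp [quarterTurn, Matrix.mul_apply]

theorem opNorm_quarterTurn_pow_mul (k : ℕ) (α : SL2) :
    opNorm (quarterTurn ^ k * α : SL2) = opNorm (α : Matrix (Fin 2) (Fin 2) ℝ) := by
  simp only [opNorm_eq_norm, Matrix.SpecialLinearGroup.coe_mul, Matrix.SpecialLinearGroup.coe_pow]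
  exact CStarRing.norm_mem_unitary_mul _ (pow_mem quarterTurn_mem_orthogonalGroup k)

theorem log_opNorm_hyperbolic (t : ℝ) :
    Real.log (opNorm (hyperbolic t : Matrix (Fin 2) (Fin 2) ℝ)) = |t| := by
  have hnorm : opNorm (hyperbolic t : Matrix (Fin 2) (Fin 2) ℝ) =
      max (Real.exp t) (Real.exp (-t)) := by
    rw [opNorm_eq_norm, hyperbolic, Matrix.l2_opNorm_diagonal]
    simp [Pi.norm_def, Fin.univ_succ, Real.norm_eq_abs]
  rw [hnorm, ← Real.exp_monotone.map_max, Real.log_exp, ← abs_eq_max_neg]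

theorem lyapPlus_dirac_hyperbolic (t : ℝ) : lyapPlus (Measure.dirac (hyperbolic t)) = |t| := by
  refine (tendsto_const_nhds.congr' ?_).limUnder_eq
  filter_upwards [eventually_ne_atTop 0] with n hn
  have hn' : (n : ℝ) ≠ 0 := mod_cast hn
  rw [lyapSeq_dirac, id, hyperbolic_pow, log_opNorm_hyperbolic, abs_mul, Nat.abs_cast,
    inv_mul_cancel_left₀ hn']

/-- The random factor decided by a coin: a quarter turn on `true`, a hyperbolic matrix on
`false`. -/
def turnOrStretch (t : ℝ) (b : Bool) : SL2 := if b then quarterTurn else hyperbolic t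

/-- The walk on `ℝ` which tracks the hyperbolic part of a product of matrices `turnOrStretch t b`:
it is reflected by `true` and translated by `t` on `false`. The head of the list, which stands for
the rightmost factor of the product, moves the walk last. -/
def reflectingWalk (t : ℝ) : List Bool → ℝ
  | [] => 0
  | true :: l => -reflectingWalk t l
  | false :: l => reflectingWalk t l + t

theorem exists_prod_turnOrStretch_eq (t : ℝ) (l : List Bool) :
    ∃ k : ℕ, (l.map (turnOrStretch t)).reverse.prod =
      quarterTurn ^ k * hyperbolic (reflectingWalk t l) := by
  induction l with
  | nil => exact ⟨0, by simp [reflectingWalk, hyperbolic_zero]⟩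
  | cons b l ih =>
    obtain ⟨k, hk⟩ := ih
    rw [List.map_cons, List.reverse_cons, List.prod_append, List.prod_singleton, hk, mul_assoc]
    cases b with
    | false => exact ⟨k, by simp [turnOrStretch, reflectingWalk, hyperbolic_add]⟩
    | true =>
      refine ⟨k + 1, ?_⟩
      simp [turnOrStretch, reflectingWalk, hyperbolic_mul_quarterTurn, pow_succ, mul_assoc]

theorem log_opNorm_prod_turnOrStretch (t : ℝ) (l : List Bool) :
    Real.log (opNorm ((l.map (turnOrStretch t)).reverse.prod : SL2)) = |reflectingWalk t l| := by
  obtain ⟨k, hk⟩ := exists_prod_turnOrStretch_eq t l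
  rw [hk, opNorm_quarterTurn_pow_mul, log_opNorm_hyperbolic]

/-- The law of `n` independent coins, each equal to `true` with probability `p`. -/
abbrev coinFlips (p : I) (n : ℕ) : Measure (Fin n → Bool) :=
  Measure.pi fun _ => Ber(true, false, p)

theorem lyapSeq_bernoulliMeasure (t : ℝ) (p : I) (n : ℕ) :
    lyapSeq id (fun α : SL2 => opNorm (α : Matrix (Fin 2) (Fin 2) ℝ))
        Ber(quarterTurn, hyperbolic t, p) n =
      (n : ℝ)⁻¹ * ∫ ω, |reflectingWalk t (List.ofFn ω)| ∂coinFlips p n := by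
  have hlaw : Ber(quarterTurn, hyperbolic t, p) = Ber(true, false, p).map (turnOrStretch t) := by
    simp [turnOrStretch]
  simp only [hlaw]
  rw [lyapSeq_id_map (measurable_of_finite _) measurable_opNorm_coe]
  simp only [lyapSeq, ← log_opNorm_prod_turnOrStretch, List.map_ofFn, Function.comp_def]

theorem integral_sq_reflectingWalk_add {p : I} {t c : ℝ} (hc : p * c = (1 - p) * t) (n : ℕ) :
    ∫ ω, (reflectingWalk t (List.ofFn ω) + c / 2) ^ 2 ∂coinFlips p n =
      n * ((1 - p : ℝ) * (t ^ 2 + c * t)) + c ^ 2 / 4 := by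
  induction n with
  | zero => simp [reflectingWalk]; ring
  | succ n ih =>
    have hstep (s : ℝ) : p * (-s + c / 2) ^ 2 + (1 - p) * (s + t + c / 2) ^ 2 =
        (s + c / 2) ^ 2 + (1 - p) * (t ^ 2 + c * t) := by
      linear_combination (-2 * s) * hc
    rw [integral_pi_fin_succ _ .of_finite]
    simp only [List.ofFn_cons, integral_bernoulliMeasure, reflectingWalk, smul_eq_mul, hstep]
    rw [integral_add .of_finite .of_finite, ih, integral_const, probReal_univ, one_smul]
    push_cast
    ring

theorem integral_abs_reflectingWalk_le {p : I} {t c : ℝ} (hc : p * c = (1 - p) * t) (n : ℕ) :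
    ∫ ω, |reflectingWalk t (List.ofFn ω)| ∂coinFlips p n ≤
      √(n * ((1 - p : ℝ) * (t ^ 2 + c * t)) + c ^ 2 / 4) + |c / 2| := by
  calc ∫ ω, |reflectingWalk t (List.ofFn ω)| ∂coinFlips p n
      ≤ ∫ ω, (|reflectingWalk t (List.ofFn ω) + c / 2| + |c / 2|) ∂coinFlips p n := by
        refine integral_mono .of_finite .of_finite fun ω => ?_
        simpa using abs_sub (reflectingWalk t (List.ofFn ω) + c / 2) (c / 2)
    _ = ∫ ω, |reflectingWalk t (List.ofFn ω) + c / 2| ∂coinFlips p n + |c / 2| := by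
        rw [integral_add .of_finite .of_finite, integral_const, probReal_univ, one_smul]
    _ ≤ √(n * ((1 - p : ℝ) * (t ^ 2 + c * t)) + c ^ 2 / 4) + |c / 2| := by
        gcongr
        rw [← integral_sq_reflectingWalk_add hc]
        refine Real.le_sqrt_of_sq_le ((sq_integral_le_integral_sq .of_discrete).trans_eq ?_)
        simp only [sq_abs]

theorem tendsto_inv_mul_sqrt_linear (a b : ℝ) :
    Tendsto (fun n : ℕ => (n : ℝ)⁻¹ * √(n * a + b)) atTop (𝓝 0) := by
  have hinv : Tendsto (fun n : ℕ => (n : ℝ)⁻¹) atTop (𝓝 0) := tendsto_inv_atTop_nhds_zero_nat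
  have hlim : Tendsto (fun n : ℕ => √((n : ℝ)⁻¹ * a + (n : ℝ)⁻¹ ^ 2 * b)) atTop (𝓝 0) := by
    simpa using ((hinv.mul_const a).add ((hinv.pow 2).mul_const b)).sqrt
  refine hlim.congr' ?_
  filter_upwards [eventually_ne_atTop 0] with n hn
  have hn' : (n : ℝ) ≠ 0 := mod_cast hn
  calc √((n : ℝ)⁻¹ * a + (n : ℝ)⁻¹ ^ 2 * b) = √((n : ℝ)⁻¹ ^ 2 * (n * a + b)) := by
        congr 1
        field_simp
    _ = (n : ℝ)⁻¹ * √(n * a + b) := by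
        rw [Real.sqrt_mul (sq_nonneg _), Real.sqrt_sq (inv_nonneg.2 n.cast_nonneg)]

theorem lyapPlus_bernoulliMeasure_eq_zero {p : I} (hp : 0 < p) (t : ℝ) :
    lyapPlus Ber(quarterTurn, hyperbolic t, p) = 0 := by
  have hp' : (p : ℝ) ≠ 0 := unitInterval.coe_ne_zero.2 hp.ne'
  obtain ⟨c, hc⟩ : ∃ c : ℝ, p * c = (1 - p) * t := ⟨_, mul_div_cancel₀ _ hp'⟩
  refine Tendsto.limUnder_eq ?_
  have hlim := (tendsto_inv_mul_sqrt_linear ((1 - p) * (t ^ 2 + c * t)) (c ^ 2 / 4)).add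
    (tendsto_inv_atTop_nhds_zero_nat.mul_const |c / 2|)
  rw [zero_mul, add_zero] at hlim
  refine squeeze_zero (fun n => ?_) (fun n => ?_) hlim
  · rw [lyapSeq_bernoulliMeasure]
    positivity
  · rw [lyapSeq_bernoulliMeasure, ← mul_add]
    gcongr
    exact integral_abs_reflectingWalk_le hc n

/-- **Discontinuity of `λ₊` in the Wasserstein topology.**
There are Borel probability measures `q` and `q_n` on `SL(2,ℝ)`, all with finite first
moment (elements of `P₁(SL(2,ℝ))`), such that `W₁(q_n, q) → 0`, `λ₊(q_n) = 0` for every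
`n`, and `λ₊(q) > 0`. -/
theorem lyapPlus_not_continuous_wasserstein :
    ∃ (q : ProbabilityMeasure SL2) (qn : ℕ → ProbabilityMeasure SL2),
      (∫⁻ α, ENNReal.ofReal (dSL 1 α) ∂(q : Measure SL2) < ⊤) ∧
      (∀ n, ∫⁻ α, ENNReal.ofReal (dSL 1 α) ∂(qn n : Measure SL2) < ⊤) ∧
      Tendsto (fun n => W1 dSL (qn n : Measure SL2) (q : Measure SL2)) atTop (𝓝 0) ∧
      (∀ n, lyapPlus (qn n : Measure SL2) = 0) ∧
      0 < lyapPlus (q : Measure SL2) := by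
  obtain ⟨p, -, hp, hp_lim⟩ := exists_seq_strictAnti_tendsto' (zero_lt_one (α := I))
  refine ⟨⟨Measure.dirac (hyperbolic 1), inferInstance⟩,
    fun n => ⟨Ber(quarterTurn, hyperbolic 1, p n), inferInstance⟩, ?_, ?_, ?_, ?_, ?_⟩
  · simp
  · exact fun n => lintegral_bernoulliMeasure_lt_top _ ENNReal.ofReal_ne_top ENNReal.ofReal_ne_top
  · exact (tendsto_W1_bernoulliMeasure_dirac _ (dSL_self _)).comp hp_lim
  · exact fun n => lyapPlus_bernoulliMeasure_eq_zero (hp n).1 1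
  · exact (lyapPlus_dirac_hyperbolic 1).symm ▸ by simp
end
end

section
/- Let 0 < r < 1/2 < s < 1, l = s/r, and σ_k = e^{l^k} for k ≥ 1. Define matrices α(2k−1) = diag(σ_k, σ_k⁻¹) and α(2k) = diag(σ_k⁻¹, σ_k), and weights p₁ = p₂ = (1 − 2r²/(1−r))/2 and p_{2k−1} = p_{2k} = r^k for k ≥ 2, and let q = Σ_{k} p_k δ_{α(k)}. Then ∫ log‖α‖ dq(α) < ∞, but ∫ ‖α − id‖ dq(α) = Σ_{k≥1} 2 p_{2k} (e^{l^k} − 1) = +∞; in particular q does not belong to P₁(SL(2,ℝ)). -/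
open MeasureTheory Filter Topology Matrix
open scoped ENNReal

noncomputable section

/-!
The norm of `α(k)` is `σ_k = exp (l ^ k)` and its distance to the identity is `σ_k - 1`. Hence the
log-moment of `q` is essentially the geometric series `∑ 2 r ^ k * l ^ k = ∑ 2 s ^ k`, whereas the
first moment is `∑ 2 r ^ k * (exp (l ^ k) - 1)`, whose terms blow up: as `l > 1`, the exponential
of `l ^ k` outgrows the power `(l ^ k) ^ m`, where `m` is chosen so large that `1 ≤ r * l ^ m`.
-/

open scoped Matrix.Norms.L2Operator in
theorem opNorm_eq_l2_norm (A : Matrix (Fin 2) (Fin 2) ℝ) : opNorm A = ‖A‖ := rfl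

open scoped Matrix.Norms.L2Operator in
theorem continuous_opNorm : Continuous opNorm :=
  continuous_norm.congr fun A => (opNorm_eq_l2_norm A).symm

theorem opNorm_diagonal (x y : ℝ) : opNorm (diagonal ![x, y]) = max |x| |y| := by
  rw [opNorm_eq_l2_norm, l2_opNorm_diagonal]
  simp [Pi.norm_def, Fin.univ_succ]

theorem opNorm_diagonal_sub_one (x y : ℝ) :
    opNorm (diagonal ![x, y] - 1) = max |x - 1| |y - 1| := by
  have h : diagonal ![x, y] - 1 = diagonal ![x - 1, y - 1] := by
    rw [← diagonal_one, diagonal_sub]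
    congr 1
    ext i
    fin_cases i <;> rfl
  rw [h, opNorm_diagonal]

theorem max_abs_inv_of_one_le {x : ℝ} (hx : 1 ≤ x) : max |x| |x⁻¹| = x := by
  have hx0 : 0 < x := by linarith
  rw [abs_of_pos hx0, abs_of_pos (inv_pos.2 hx0)]
  exact max_eq_left ((inv_le_one_of_one_le₀ hx).trans hx)

theorem max_abs_sub_one_inv_sub_one_of_one_le {x : ℝ} (hx : 1 ≤ x) :
    max |x - 1| |x⁻¹ - 1| = x - 1 := by
  have hx0 : 0 < x := by linarith
  have hinv : x⁻¹ - 1 = -((x - 1) / x) := by field_simp; ring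
  rw [hinv, abs_neg, abs_of_nonneg (sub_nonneg.2 hx),
    abs_of_nonneg (div_nonneg (sub_nonneg.2 hx) hx0.le)]
  exact max_eq_left (div_le_self (sub_nonneg.2 hx) hx)

theorem measurable_comp_coe_SL2 {Y : Type*} [TopologicalSpace Y] [MeasurableSpace Y]
    [BorelSpace Y] {g : Matrix (Fin 2) (Fin 2) ℝ → Y} (hg : Continuous g) :
    Measurable fun α : SL2 => g α :=
  have : OpensMeasurableSpace SL2 := ⟨le_rfl⟩
  (hg.comp continuous_induced_dom).measurable

theorem lintegral_sum_ite_smul_dirac_add_dirac {ι X : Type*} [MeasurableSpace X]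
    (p : ι → Prop) [DecidablePred p] (w : ι → ℝ≥0∞) {a b : ι → X} {c : ι → ℝ≥0∞}
    {f : X → ℝ≥0∞} (hf : Measurable f)
    (ha : ∀ i, p i → f (a i) = c i) (hb : ∀ i, p i → f (b i) = c i) :
    ∫⁻ x, f x ∂(Measure.sum fun i =>
      if p i then w i • (Measure.dirac (a i) + Measure.dirac (b i)) else 0) =
      ∑' i, if p i then 2 * w i * c i else 0 := by
  rw [lintegral_sum_measure]
  refine tsum_congr fun i => ?_
  split_ifs with hi
  · rw [lintegral_smul_measure, lintegral_add_measure, lintegral_dirac' _ hf,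
      lintegral_dirac' _ hf, ha i hi, hb i hi, smul_eq_mul]
    ring
  · exact lintegral_zero_measure f

section DiagonalPairs

variable {ι : Type*} {p : ι → Prop} [DecidablePred p] {x : ι → ℝ} {a b : ι → SL2}

theorem lintegral_comp_opNorm_of_diagonal_inv (w : ι → ℝ≥0∞) (hx : ∀ i, 1 ≤ x i)
    (ha : ∀ i, p i → (a i : Matrix (Fin 2) (Fin 2) ℝ) = diagonal ![x i, (x i)⁻¹])
    (hb : ∀ i, p i → (b i : Matrix (Fin 2) (Fin 2) ℝ) = diagonal ![(x i)⁻¹, x i])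
    {g : ℝ → ℝ≥0∞} (hg : Measurable g) :
    ∫⁻ α : SL2, g (opNorm α) ∂(Measure.sum fun i =>
      if p i then w i • (Measure.dirac (a i) + Measure.dirac (b i)) else 0) =
      ∑' i, if p i then 2 * w i * g (x i) else 0 := by
  refine lintegral_sum_ite_smul_dirac_add_dirac p w
    (hg.comp (measurable_comp_coe_SL2 continuous_opNorm)) (fun i hi => ?_) fun i hi => ?_
  · rw [ha i hi, opNorm_diagonal, max_abs_inv_of_one_le (hx i)]
  · rw [hb i hi, opNorm_diagonal, max_comm, max_abs_inv_of_one_le (hx i)]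

theorem lintegral_opNorm_sub_one_of_diagonal_inv (w : ι → ℝ≥0∞) (hx : ∀ i, 1 ≤ x i)
    (ha : ∀ i, p i → (a i : Matrix (Fin 2) (Fin 2) ℝ) = diagonal ![x i, (x i)⁻¹])
    (hb : ∀ i, p i → (b i : Matrix (Fin 2) (Fin 2) ℝ) = diagonal ![(x i)⁻¹, x i]) :
    ∫⁻ α : SL2, ENNReal.ofReal (opNorm ((α : Matrix (Fin 2) (Fin 2) ℝ) - 1)) ∂(Measure.sum fun i =>
      if p i then w i • (Measure.dirac (a i) + Measure.dirac (b i)) else 0) =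
      ∑' i, if p i then 2 * w i * ENNReal.ofReal (x i - 1) else 0 := by
  have hmeas : Measurable fun α : SL2 => opNorm ((α : Matrix (Fin 2) (Fin 2) ℝ) - 1) :=
    measurable_comp_coe_SL2 (continuous_opNorm.comp (continuous_sub_right 1))
  refine lintegral_sum_ite_smul_dirac_add_dirac p w hmeas.ennreal_ofReal
    (fun i hi => ?_) fun i hi => ?_
  · rw [ha i hi, opNorm_diagonal_sub_one, max_abs_sub_one_inv_sub_one_of_one_le (hx i)]
  · rw [hb i hi, opNorm_diagonal_sub_one, max_comm, max_abs_sub_one_inv_sub_one_of_one_le (hx i)]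

end DiagonalPairs

theorem tsum_lt_top_of_eventually_le {f g : ℕ → ℝ≥0∞} (hf : ∀ k, f k ≠ ⊤)
    (hfg : ∀ᶠ k in atTop, f k ≤ g k) (hg : ∑' k, g k < ⊤) : ∑' k, f k < ⊤ := by
  obtain ⟨N, hN⟩ := eventually_atTop.1 hfg
  rw [← ENNReal.summable.sum_add_tsum_nat_add' (k := N), ENNReal.add_lt_top]
  refine ⟨ENNReal.sum_lt_top.2 fun k _ => (hf k).lt_top, ?_⟩
  calc ∑' k, f (k + N) ≤ ∑' k, g (k + N) :=
        ENNReal.tsum_le_tsum fun k => hN _ (Nat.le_add_left N k)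
    _ ≤ ∑' k, g k := ENNReal.tsum_comp_le_tsum_of_injective (add_left_injective N) g
    _ < ⊤ := hg

theorem tsum_eq_top_of_tendsto {f : ℕ → ℝ≥0∞} {c : ℝ≥0∞} (hc : c ≠ 0)
    (hf : Tendsto f atTop (𝓝 c)) : ∑' k, f k = ⊤ := by
  by_contra hfin
  exact hc (tendsto_nhds_unique hf (ENNReal.tendsto_atTop_zero_of_tsum_ne_top hfin))

theorem tendsto_pow_mul_exp_pow_sub_one_atTop {r l : ℝ} (hr : 0 < r) (hl : 1 < l) :
    Tendsto (fun k : ℕ => r ^ k * (Real.exp (l ^ k) - 1)) atTop atTop := by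
  obtain ⟨m, hm⟩ := pow_unbounded_of_one_lt r⁻¹ hl
  have hdiv : Tendsto (fun k : ℕ => (Real.exp (l ^ k) - 1) / (l ^ k) ^ m) atTop atTop := by
    simpa only [Function.comp_def, one_mul, ← sub_eq_add_neg] using
      (Real.tendsto_mul_exp_add_div_pow_atTop 1 (-1) m one_pos).comp
        (tendsto_pow_atTop_atTop_of_one_lt hl)
  refine tendsto_atTop_mono (fun k => ?_) hdiv
  have hexp : 0 ≤ Real.exp (l ^ k) - 1 := sub_nonneg.2 (Real.one_le_exp (by positivity))
  have hpow : ((l ^ k) ^ m)⁻¹ ≤ r ^ k := by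
    rw [pow_right_comm, ← inv_pow]
    exact pow_le_pow_left₀ (by positivity) (inv_le_of_inv_le₀ hr hm.le) k
  rw [div_eq_inv_mul]
  exact mul_le_mul_of_nonneg_right hpow hexp

section GeometricWeights

variable {r l : ℝ} {w : ℕ → ℝ≥0∞}

theorem tsum_weight_mul_pow_lt_top (hr : 0 ≤ r) (hl : 0 ≤ l) (hrl : r * l < 1)
    (hw1 : w 1 ≠ ⊤) (hw : ∀ k, 2 ≤ k → w k = ENNReal.ofReal (r ^ k)) :
    ∑' k : ℕ, (if 1 ≤ k then 2 * w k * ENNReal.ofReal (l ^ k) else 0) < ⊤ := by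
  have hgeom : ∑' k : ℕ, ENNReal.ofReal (2 * (r * l) ^ k) < ⊤ :=
    ((summable_geometric_of_lt_one (by positivity) hrl).mul_left 2).tsum_ofReal_lt_top
  refine tsum_lt_top_of_eventually_le (fun k => ?_) ?_ hgeom
  · split_ifs with hk
    · have hwk : w k ≠ ⊤ := by
        rcases hk.eq_or_lt with rfl | hk2
        · exact hw1
        · exact hw k hk2 ▸ ENNReal.ofReal_ne_top
      finiteness
    · exact ENNReal.zero_ne_top
  · filter_upwards [eventually_ge_atTop 2] with k hk
    rw [if_pos (one_le_two.trans hk), hw k hk, mul_pow, ENNReal.ofReal_mul zero_le_two,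
      ENNReal.ofReal_mul (by positivity), ENNReal.ofReal_ofNat, mul_assoc]

theorem tsum_weight_mul_exp_pow_sub_one_eq_top (hr : 0 < r) (hl : 1 < l)
    (hw : ∀ k, 2 ≤ k → w k = ENNReal.ofReal (r ^ k)) :
    ∑' k : ℕ, (if 1 ≤ k then 2 * w k * ENNReal.ofReal (Real.exp (l ^ k) - 1) else 0) = ⊤ := by
  have hlim : Tendsto (fun k : ℕ => ENNReal.ofReal (2 * (r ^ k * (Real.exp (l ^ k) - 1))))
      atTop (𝓝 ⊤) :=
    ENNReal.tendsto_ofReal_atTop.comp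
      ((tendsto_pow_mul_exp_pow_sub_one_atTop hr hl).const_mul_atTop two_pos)
  refine tsum_eq_top_of_tendsto ENNReal.top_ne_zero (hlim.congr' ?_)
  filter_upwards [eventually_ge_atTop 2] with k hk
  rw [if_pos (one_le_two.trans hk), hw k hk, ENNReal.ofReal_mul zero_le_two,
    ENNReal.ofReal_mul (by positivity), ENNReal.ofReal_ofNat, mul_assoc]

end GeometricWeights

theorem log_integrable_but_infinite_first_moment_general
    (r s l : ℝ) (hr0 : 0 < r) (hrs : r < s) (hs1 : s < 1) (hl : l = s / r)
    (σ : ℕ → ℝ) (hσ : ∀ k, σ k = Real.exp (l ^ k))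
    (a b : ℕ → SL2)
    (ha : ∀ k, 1 ≤ k → (a k : Matrix (Fin 2) (Fin 2) ℝ) = Matrix.diagonal ![σ k, (σ k)⁻¹])
    (hb : ∀ k, 1 ≤ k → (b k : Matrix (Fin 2) (Fin 2) ℝ) = Matrix.diagonal ![(σ k)⁻¹, σ k])
    (w : ℕ → ℝ≥0∞) (hw1 : w 1 ≠ ⊤) (hw : ∀ k, 2 ≤ k → w k = ENNReal.ofReal (r ^ k))
    (q : Measure SL2)
    (hq : q = Measure.sum fun k : ℕ =>
      if 1 ≤ k then w k • (Measure.dirac (a k) + Measure.dirac (b k)) else 0) :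
    (∫⁻ α, ENNReal.ofReal (Real.log (opNorm (α : Matrix (Fin 2) (Fin 2) ℝ))) ∂q < ⊤) ∧
    (∫⁻ α, ENNReal.ofReal (opNorm ((α : Matrix (Fin 2) (Fin 2) ℝ) - 1)) ∂q =
      ∑' k : ℕ, if 1 ≤ k then 2 * w k * ENNReal.ofReal (Real.exp (l ^ k) - 1) else 0) ∧
    (∫⁻ α, ENNReal.ofReal (opNorm ((α : Matrix (Fin 2) (Fin 2) ℝ) - 1)) ∂q = ⊤) := by
  have hl1 : 1 < l := hl ▸ (one_lt_div hr0).2 hrs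
  have hrl : r * l = s := hl ▸ mul_div_cancel₀ s hr0.ne'
  have hσ1 (k : ℕ) : 1 ≤ σ k := hσ k ▸ Real.one_le_exp (by positivity)
  have hlog : ∫⁻ α, ENNReal.ofReal (Real.log (opNorm (α : Matrix (Fin 2) (Fin 2) ℝ))) ∂q =
      ∑' k : ℕ, if 1 ≤ k then 2 * w k * ENNReal.ofReal (l ^ k) else 0 := by
    simpa only [hq, hσ, Real.log_exp] using
      lintegral_comp_opNorm_of_diagonal_inv w hσ1 ha hb Real.measurable_log.ennreal_ofReal
  have hdist : ∫⁻ α, ENNReal.ofReal (opNorm ((α : Matrix (Fin 2) (Fin 2) ℝ) - 1)) ∂q =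
      ∑' k : ℕ, if 1 ≤ k then 2 * w k * ENNReal.ofReal (Real.exp (l ^ k) - 1) else 0 := by
    simpa only [hq, hσ] using lintegral_opNorm_sub_one_of_diagonal_inv w hσ1 ha hb
  exact ⟨hlog ▸ tsum_weight_mul_pow_lt_top hr0.le (by linarith) (hrl ▸ hs1) hw1 hw, hdist,
    hdist.trans (tsum_weight_mul_exp_pow_sub_one_eq_top hr0 hl1 hw)⟩

/-- **A measure with integrable `log‖α‖` but infinite first moment.**
Let `0 < r < 1/2 < s < 1`, `l = s/r`, `σ_k = e^{l^k}`. Let `a k = diag(σ_k, σ_k⁻¹)` and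
`b k = diag(σ_k⁻¹, σ_k)` (these are the matrices `α(2k−1)` and `α(2k)`), carrying the
weights `p_{2k−1} = p_{2k} = w k`, with `w 1 = (1 − 2r²/(1−r))/2` and `w k = r^k` for
`k ≥ 2`, and let `q = Σ_k p_k δ_{α(k)}`. Then `∫ log‖α‖ dq < ∞`, while
`∫ ‖α − id‖ dq = Σ_{k≥1} 2 p_{2k} (e^{l^k} − 1) = ∞`; in particular
`q ∉ P₁(SL(2,ℝ))`. -/
theorem log_integrable_but_infinite_first_moment
    (r s l : ℝ) (hr0 : 0 < r) (hr : r < 1 / 2) (hs : 1 / 2 < s) (hs1 : s < 1)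
    (hl : l = s / r)
    (σ : ℕ → ℝ) (hσ : ∀ k, σ k = Real.exp (l ^ k))
    (a b : ℕ → SL2)
    (ha : ∀ k, 1 ≤ k → (a k : Matrix (Fin 2) (Fin 2) ℝ) = Matrix.diagonal ![σ k, (σ k)⁻¹])
    (hb : ∀ k, 1 ≤ k → (b k : Matrix (Fin 2) (Fin 2) ℝ) = Matrix.diagonal ![(σ k)⁻¹, σ k])
    (w : ℕ → ℝ≥0∞)
    (hw1 : w 1 = ENNReal.ofReal ((1 - 2 * r ^ 2 / (1 - r)) / 2))
    (hw : ∀ k, 2 ≤ k → w k = ENNReal.ofReal (r ^ k))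
    (q : Measure SL2)
    (hq : q = Measure.sum fun k : ℕ =>
      if 1 ≤ k then w k • (Measure.dirac (a k) + Measure.dirac (b k)) else 0) :
    (∫⁻ α, ENNReal.ofReal (Real.log (opNorm (α : Matrix (Fin 2) (Fin 2) ℝ))) ∂q < ⊤) ∧
    (∫⁻ α, ENNReal.ofReal (opNorm ((α : Matrix (Fin 2) (Fin 2) ℝ) - 1)) ∂q =
      ∑' k : ℕ, if 1 ≤ k then 2 * w k * ENNReal.ofReal (Real.exp (l ^ k) - 1) else 0) ∧
    (∫⁻ α, ENNReal.ofReal (opNorm ((α : Matrix (Fin 2) (Fin 2) ℝ) - 1)) ∂q = ⊤) := by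
  exact log_integrable_but_infinite_first_moment_general r s l hr0 (hr.trans hs) hs1 hl σ hσ a b
    ha hb w (hw1 ▸ ENNReal.ofReal_ne_top) hw q hq
end
end
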